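/- Every element of the group K generated by k₁ : x ↦ −x̄ i and k₂ : x ↦ −j x̄ k can be written uniquely in the form k₁^{e₁} ∘ k₂^{e₂} with e₁, e₂ ∈ {0, 1, 2, 3}: for all e₁, e₂, f₁, f₂ ∈ {0,1,2,3}, if k₁^{e₁} ∘ k₂^{e₂} = k₁^{f₁} ∘ k₂^{f₂} then e₁ = f₁ and e₂ = f₂, and every g ∈ K equals k₁^{e₁} ∘ k₂^{e₂} for some e₁, e₂ ∈ {0,1,2,3}. -/

import Mathlib

open Quaternion

noncomputable section

def qi : ℍ[ℝ] := ⟨0, 1, 0, 0⟩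
def qj : ℍ[ℝ] := ⟨0, 0, 1, 0⟩
def qk : ℍ[ℝ] := ⟨0, 0, 0, 1⟩

lemma norm_qi : ‖qi‖ = 1 := by
  have h : normSq qi = 1 := by rw [Quaternion.normSq_def']; simp [qi]
  have h2 := Quaternion.normSq_eq_norm_mul_self qi
  nlinarith [norm_nonneg qi]

lemma norm_qj : ‖qj‖ = 1 := by
  have h : normSq qj = 1 := by rw [Quaternion.normSq_def']; simp [qj]
  have h2 := Quaternion.normSq_eq_norm_mul_self qj
  nlinarith [norm_nonneg qj]

lemma norm_qk : ‖qk‖ = 1 := by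
  have h : normSq qk = 1 := by rw [Quaternion.normSq_def']; simp [qk]
  have h2 := Quaternion.normSq_eq_norm_mul_self qk
  nlinarith [norm_nonneg qk]

/-- Build a linear isometry equivalence of `ℍ[ℝ]` from a norm-preserving linear map. -/
def toIso (f : ℍ[ℝ] →ₗ[ℝ] ℍ[ℝ]) (h : ∀ x, ‖f x‖ = ‖x‖) : ℍ[ℝ] ≃ₗᵢ[ℝ] ℍ[ℝ] :=
  LinearIsometryEquiv.ofSurjective ⟨f, h⟩
    (LinearMap.injective_iff_surjective.mp (LinearIsometry.injective ⟨f, h⟩))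

/-- k₁ : x ↦ −x̄ i -/
def k1 : ℍ[ℝ] ≃ₗᵢ[ℝ] ℍ[ℝ] :=
  toIso
    { toFun := fun x => -(star x * qi)
      map_add' := fun x y => by simp [star_add, add_mul, add_comm]
      map_smul' := fun r x => by simp [Quaternion.star_smul, smul_mul_assoc] }
    (fun x => by simp [norm_mul, Quaternion.norm_star, norm_qi])

/-- k₂ : x ↦ −j x̄ k -/
def k2 : ℍ[ℝ] ≃ₗᵢ[ℝ] ℍ[ℝ] :=
  toIso
    { toFun := fun x => -(qj * star x * qk)
      map_add' := fun x y => by simp [star_add, mul_add, add_mul, add_comm]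
      map_smul' := fun r x => by
        simp [Quaternion.star_smul, smul_mul_assoc, mul_smul_comm] }
    (fun x => by simp [norm_mul, Quaternion.norm_star, norm_qj, norm_qk])

@[simp] lemma k1_apply (x : ℍ[ℝ]) : k1 x = -(star x * qi) := rfl
@[simp] lemma k2_apply (x : ℍ[ℝ]) : k2 x = -(qj * star x * qk) := rfl

/-- The group `K`. -/
def K : Subgroup (ℍ[ℝ] ≃ₗᵢ[ℝ] ℍ[ℝ]) := Subgroup.closure {k1, k2}

/-- The quaternion with the given coordinates. -/
def q4 (a b c d : ℝ) : ℍ[ℝ] := ⟨a, b, c, d⟩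

lemma q4_re (a b c d : ℝ) : (q4 a b c d).re = a := rfl
lemma q4_imI (a b c d : ℝ) : (q4 a b c d).imI = b := rfl
lemma q4_imJ (a b c d : ℝ) : (q4 a b c d).imJ = c := rfl
lemma q4_imK (a b c d : ℝ) : (q4 a b c d).imK = d := rfl

lemma q4_inj {a b c d a' b' c' d' : ℝ} :
    q4 a b c d = q4 a' b' c' d' ↔ a = a' ∧ b = b' ∧ c = c' ∧ d = d' := by
  constructor
  · intro h
    exact ⟨congrArg (fun q : ℍ[ℝ] => q.re) h, congrArg (fun q : ℍ[ℝ] => q.imI) h,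
      congrArg (fun q : ℍ[ℝ] => q.imJ) h, congrArg (fun q : ℍ[ℝ] => q.imK) h⟩
  · rintro ⟨rfl, rfl, rfl, rfl⟩; rfl

lemma qi_eq : qi = q4 0 1 0 0 := rfl
lemma qj_eq : qj = q4 0 0 1 0 := rfl
lemma qk_eq : qk = q4 0 0 0 1 := rfl

lemma k1_mk (a b c d : ℝ) : k1 (q4 a b c d) = q4 (-b) (-a) d (-c) := by
  rw [k1_apply, qi_eq]; ext <;> simp [q4_re, q4_imI, q4_imJ, q4_imK]

lemma k2_mk (a b c d : ℝ) : k2 (q4 a b c d) = q4 b (-a) (-d) (-c) := by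
  rw [k2_apply, qj_eq, qk_eq]; ext <;> simp [q4_re, q4_imI, q4_imJ, q4_imK]

lemma iso_ext {f g : ℍ[ℝ] ≃ₗᵢ[ℝ] ℍ[ℝ]} (h : ∀ a b c d : ℝ, f (q4 a b c d) = g (q4 a b c d)) :
    f = g := by
  apply LinearIsometryEquiv.ext
  rintro ⟨a, b, c, d⟩
  exact h a b c d

lemma k1_pow_four : k1 ^ 4 = 1 := by
  apply iso_ext; intro a b c d
  simp only [pow_succ, pow_zero, one_mul, LinearIsometryEquiv.coe_mul, Function.comp_apply, k1_mk,
    LinearIsometryEquiv.coe_one, id, neg_neg]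

lemma k2_pow_four : k2 ^ 4 = 1 := by
  apply iso_ext; intro a b c d
  simp only [pow_succ, pow_zero, one_mul, LinearIsometryEquiv.coe_mul, Function.comp_apply, k2_mk,
    LinearIsometryEquiv.coe_one, id, neg_neg]

lemma k2_mul_k1 : k2 * k1 = k1 ^ 3 * k2 ^ 3 := by
  apply iso_ext; intro a b c d
  simp only [pow_succ, pow_zero, one_mul, LinearIsometryEquiv.coe_mul, Function.comp_apply, k1_mk,
    k2_mk, neg_neg]

lemma k2_mul_k1_sq : k2 * k1 ^ 2 = k1 ^ 2 * k2 := by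
  apply iso_ext; intro a b c d
  simp only [pow_succ, pow_zero, one_mul, LinearIsometryEquiv.coe_mul, Function.comp_apply, k1_mk,
    k2_mk, neg_neg]

/-- Being of the normal form, with no bound on the exponents. -/
def NF (g : ℍ[ℝ] ≃ₗᵢ[ℝ] ℍ[ℝ]) : Prop := ∃ m n : ℕ, g = k1 ^ m * k2 ^ n

lemma NF.k1_mul {g} (h : NF g) : NF (k1 * g) := by
  obtain ⟨m, n, rfl⟩ := h
  exact ⟨m + 1, n, by rw [pow_succ' k1, mul_assoc]⟩

lemma NF.k2_mul {g} (h : NF g) : NF (k2 * g) := by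
  obtain ⟨m, n, rfl⟩ := h
  have hc : ∀ t : ℕ, k2 * (k1 ^ 2) ^ t = (k1 ^ 2) ^ t * k2 := fun t =>
    ((show Commute k2 (k1 ^ 2) from k2_mul_k1_sq).pow_right t).eq
  obtain ⟨t, rfl | rfl⟩ := Nat.even_or_odd' m
  · refine ⟨2 * t, n + 1, ?_⟩
    rw [pow_mul, ← mul_assoc, hc, pow_succ' k2, mul_assoc]
  · refine ⟨2 * t + 3, 3 + n, ?_⟩
    rw [pow_succ, pow_mul, ← mul_assoc, ← mul_assoc, hc, mul_assoc _ k2 k1, k2_mul_k1,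
      pow_add, pow_add, pow_mul]
    simp only [mul_assoc]

lemma NF_of_mem {g} (hg : g ∈ K) : NF g := by
  have e1 : k1⁻¹ = k1 * k1 * k1 := by
    rw [inv_eq_iff_mul_eq_one, ← k1_pow_four]; simp only [pow_succ, pow_zero, one_mul, mul_assoc]
  have e2 : k2⁻¹ = k2 * k2 * k2 := by
    rw [inv_eq_iff_mul_eq_one, ← k2_pow_four]; simp only [pow_succ, pow_zero, one_mul, mul_assoc]
  induction hg using Subgroup.closure_induction_left with
  | one => exact ⟨0, 0, by simp⟩
  | mul_left x hx y _ ih =>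
    rcases hx with rfl | rfl
    · exact ih.k1_mul
    · exact ih.k2_mul
  | inv_mul_cancel x hx y _ ih =>
    rcases hx with rfl | rfl
    · rw [e1, mul_assoc, mul_assoc]; exact ih.k1_mul.k1_mul.k1_mul
    · rw [e2, mul_assoc, mul_assoc]; exact ih.k2_mul.k2_mul.k2_mul

/-- Every element of `K` can be written uniquely as `k₁^{e₁} ∘ k₂^{e₂}` with
`e₁, e₂ ∈ {0, 1, 2, 3}`. -/
theorem stmt_9 :
    (∀ g ∈ K, ∃ e₁ e₂ : ℕ, e₁ < 4 ∧ e₂ < 4 ∧ g = k1 ^ e₁ * k2 ^ e₂) ∧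
    (∀ e₁ e₂ f₁ f₂ : ℕ, e₁ < 4 → e₂ < 4 → f₁ < 4 → f₂ < 4 →
      k1 ^ e₁ * k2 ^ e₂ = k1 ^ f₁ * k2 ^ f₂ → e₁ = f₁ ∧ e₂ = f₂) := by
  constructor
  · intro g hg
    obtain ⟨m, n, rfl⟩ := NF_of_mem hg
    refine ⟨m % 4, n % 4, Nat.mod_lt _ (by norm_num), Nat.mod_lt _ (by norm_num), ?_⟩
    rw [← pow_eq_pow_mod m k1_pow_four, ← pow_eq_pow_mod n k2_pow_four]
  · intro a b c d ha hb hc hd h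
    have h1 := congrArg (fun f : ℍ[ℝ] ≃ₗᵢ[ℝ] ℍ[ℝ] => f (q4 1 2 3 4)) h
    clear h
    interval_cases a <;> interval_cases b <;> interval_cases c <;> interval_cases d <;>
    first
    | exact ⟨rfl, rfl⟩
    | (exfalso
       simp only [pow_succ, pow_zero, one_mul, mul_one, LinearIsometryEquiv.coe_mul,
         Function.comp_apply, k1_mk, k2_mk, neg_neg, LinearIsometryEquiv.coe_one, id,
         q4_inj] at h1
       norm_num at h1)
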